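/- Let f_1,…,f_n : ℝ^d → ℝ be three times continuously differentiable, let x ∈ ℝ^d with ∇f(x) ≠ 0, let ρ, K ≥ 0, and suppose ‖D³f_i(y)‖ ≤ K for every index i and every y in the closed ball of radius ρ around x. Let γ consist of b indices drawn independently and uniformly at random from {1,…,n} and ∇f_γ = (1/b)∑_{j=1}^b ∇f_{i_j}, and set u = ∇f(x)/‖∇f(x)‖. Then the expected n-SAM update direction satisfies ‖E[∇f_γ(x + ρu)] − ∇f(x) − ρ·∇²f(x)∇f(x)/‖∇f(x)‖ ‖ ≤ (K/2)ρ², where ∇²f(x)∇f(x)/‖∇f(x)‖ is precisely the gradient of the scalar function y ↦ ‖∇f(y)‖ at x. In particular, the leading drift of n-SAM is −∇(f + ρ‖∇f‖). -/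

import Mathlib

/-! By linearity of the gradient, averaging `∇f_γ` over all tuples `γ` gives exactly `∇F`
(`average_gradient_minibatch`), so only the deterministic quantity
`∇F(x + ρu) - ∇F(x) - ρ ∇²F(x) u` has to be estimated.  Since `‖D²(∇F)‖ = ‖D³F‖ ≤ K` on the ball
and `‖u‖ = 1`, this is the second-order Taylor remainder of the vector-valued map `∇F` along a
segment (`norm_taylor_remainder_le`): the derivative in `t` of the remainder at `x + tu` is
`(DG(x + tu) - DG(x)) u`, bounded by `K t` through the mean value inequality, and integrating
gives `K ρ² / 2`.

For the gradient of `‖∇F‖`, differentiating the norm away from zero gives the functional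
`v ↦ ⟪∇F(x), ∇²F(x) v⟫ / ‖∇F(x)‖`, and symmetry of the Hessian moves it to the other side of
the inner product (`gradient_norm_gradient`).
-/

open InnerProductSpace

section NormedSpaces

variable {E V : Type*} [NormedAddCommGroup E] [NormedSpace ℝ E]
  [NormedAddCommGroup V] [NormedSpace ℝ V]

/-- Second-order Taylor bound, with the sharp constant `1/2`, for a vector-valued `C²` map along a
unit direction. -/
lemma norm_taylor_remainder_le {G : E → V} (hG : ContDiff ℝ 2 G) {x u : E} (hu : ‖u‖ = 1)
    {ρ K : ℝ} (hρ : 0 ≤ ρ)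
    (hK : ∀ y ∈ Metric.closedBall x ρ, ‖fderiv ℝ (fderiv ℝ G) y‖ ≤ K) :
    ‖G (x + ρ • u) - G x - ρ • fderiv ℝ G x u‖ ≤ K / 2 * ρ ^ 2 := by
  have hG1 : Differentiable ℝ G := hG.differentiable (by norm_num)
  have hG2 : Differentiable ℝ (fderiv ℝ G) :=
    (hG.fderiv_right (m := 1) (by norm_num)).differentiable (by norm_num)
  have hline (t : ℝ) : HasDerivAt (fun t : ℝ => x + t • u) u t := by
    simpa using ((hasDerivAt_id t).smul_const u).const_add x
  have hr (t : ℝ) : HasDerivAt (fun t : ℝ => G (x + t • u) - G x - t • fderiv ℝ G x u)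
      (fderiv ℝ G (x + t • u) u - fderiv ℝ G x u) t := by
    have h1 := (hG1 (x + t • u)).hasFDerivAt.comp_hasDerivAt t (hline t)
    have h2 : HasDerivAt (fun t : ℝ => t • fderiv ℝ G x u) (fderiv ℝ G x u) t := by
      simpa using (hasDerivAt_id t).smul_const (fderiv ℝ G x u)
    exact (h1.sub_const (G x)).sub h2
  have hB (t : ℝ) : HasDerivAt (fun t : ℝ => K / 2 * t ^ 2) (K * t) t := by
    refine ((hasDerivAt_pow 2 t).const_mul (K / 2)).congr_deriv ?_
    push_cast
    ring
  refine image_norm_le_of_norm_deriv_right_le_deriv_boundary (a := 0) (b := ρ)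
    (fun t _ => (hr t).continuousAt.continuousWithinAt)
    (fun t _ => (hr t).hasDerivWithinAt) (by simp) hB ?_ (Set.right_mem_Icc.2 hρ)
  intro t ht
  have hmem : x + t • u ∈ Metric.closedBall x ρ := by
    simp [norm_smul, hu, abs_of_nonneg ht.1, ht.2.le]
  have hmv := (convex_closedBall x ρ).norm_image_sub_le_of_norm_fderiv_le
    (fun y _ => hG2 y) hK (Metric.mem_closedBall_self hρ) hmem
  calc ‖fderiv ℝ G (x + t • u) u - fderiv ℝ G x u‖
      = ‖(fderiv ℝ G (x + t • u) - fderiv ℝ G x) u‖ := rfl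
    _ ≤ ‖fderiv ℝ G (x + t • u) - fderiv ℝ G x‖ * ‖u‖ := ContinuousLinearMap.le_opNorm _ _
    _ ≤ K * t := by simpa [hu, norm_smul, abs_of_nonneg ht.1] using hmv

lemma norm_fderiv_fderiv_eq (G : E → V) (y : E) :
    ‖fderiv ℝ (fderiv ℝ G) y‖ = ‖iteratedFDeriv ℝ 2 G y‖ := by
  rw [← norm_iteratedFDeriv_one, norm_iteratedFDeriv_fderiv]

lemma norm_iteratedFDeriv_average_le {n k : ℕ} (hn : 0 < n) {f : Fin n → E → V}
    (hf : ∀ i, ContDiff ℝ k (f i)) {y : E} {K : ℝ} (hK : ∀ i, ‖iteratedFDeriv ℝ k (f i) y‖ ≤ K) :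
    ‖iteratedFDeriv ℝ k (fun z => (n : ℝ)⁻¹ • ∑ i, f i z) y‖ ≤ K := by
  have hn' : (n : ℝ) ≠ 0 := by positivity
  rw [iteratedFDeriv_const_smul_apply' (ContDiff.sum fun i _ => hf i).contDiffAt,
    iteratedFDeriv_sum fun i _ => hf i, Finset.sum_apply, norm_smul, norm_inv, Real.norm_natCast]
  calc (n : ℝ)⁻¹ * ‖∑ i, iteratedFDeriv ℝ k (f i) y‖
      ≤ (n : ℝ)⁻¹ * (n * K) := by
        gcongr
        simpa using norm_sum_le_of_le Finset.univ fun i _ => hK i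
    _ = K := by field_simp

end NormedSpaces

section Gradients

variable {E : Type*} [NormedAddCommGroup E] [InnerProductSpace ℝ E] [CompleteSpace E]

/-- The inverse Riesz isometry of a real Hilbert space, as a linear rather than conjugate-linear
map, so that the derivative rules for composition with linear maps apply to it. -/
noncomputable def rieszInv (E : Type*) [NormedAddCommGroup E] [InnerProductSpace ℝ E]
    [CompleteSpace E] : StrongDual ℝ E ≃ₗᵢ[ℝ] E :=
  (toDual ℝ E).symm

lemma gradient_eq_rieszInv_comp (F : E → ℝ) : gradient F = rieszInv E ∘ fderiv ℝ F := rfl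

lemma norm_iteratedFDeriv_gradient (F : E → ℝ) (k : ℕ) (y : E) :
    ‖iteratedFDeriv ℝ k (gradient F) y‖ = ‖iteratedFDeriv ℝ (k + 1) F y‖ := by
  rw [gradient_eq_rieszInv_comp, LinearIsometryEquiv.norm_iteratedFDeriv_comp_left,
    norm_iteratedFDeriv_fderiv]

lemma contDiff_gradient {F : E → ℝ} (hF : ContDiff ℝ 3 F) : ContDiff ℝ 2 (gradient F) := by
  rw [gradient_eq_rieszInv_comp]
  exact (rieszInv E).contDiff.comp (hF.fderiv_right (by norm_num))

lemma inner_fderiv_gradient (F : E → ℝ) (x v w : E) :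
    inner ℝ (fderiv ℝ (gradient F) x v) w = fderiv ℝ (fderiv ℝ F) x v w := by
  rw [gradient_eq_rieszInv_comp, LinearIsometryEquiv.comp_fderiv]
  exact toDual_symm_apply

/-- The gradient of the gradient norm is the Hessian applied to the normalized gradient. -/
lemma gradient_norm_gradient {F : E → ℝ} (hF : ContDiff ℝ 3 F) {x : E} (hx : gradient F x ≠ 0) :
    gradient (fun y => ‖gradient F y‖) x =
      ‖gradient F x‖⁻¹ • fderiv ℝ (gradient F) x (gradient F x) := by
  have hg : HasFDerivAt (gradient F) (fderiv ℝ (gradient F) x) x :=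
    ((contDiff_gradient hF).differentiable (by norm_num) x).hasFDerivAt
  have hsymm : IsSymmSndFDerivAt ℝ F x :=
    hF.contDiffAt.isSymmSndFDerivAt (by simp; norm_num)
  have hpos : ‖gradient F x‖ ≠ 0 := norm_ne_zero_iff.2 hx
  have hsqrt := hg.norm_sq.sqrt (by positivity)
  simp only [Real.sqrt_sq (norm_nonneg _)] at hsqrt
  refine HasGradientAt.gradient (hasGradientAt_iff_hasFDerivAt.2 (hsqrt.congr_fderiv ?_))
  ext v
  have h : inner ℝ (fderiv ℝ (gradient F) x (gradient F x)) v =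
      inner ℝ (gradient F x) (fderiv ℝ (gradient F) x v) := by
    rw [inner_fderiv_gradient, hsymm.eq, ← inner_fderiv_gradient, real_inner_comm]
  simp [h]
  field_simp

lemma gradient_const_mul_sum {ι : Type*} [Fintype ι] (c : ℝ) {f : ι → E → ℝ} {z : E}
    (hf : ∀ i, DifferentiableAt ℝ (f i) z) :
    gradient (fun y => c * ∑ i, f i y) z = c • ∑ i, gradient (f i) z := by
  have h : HasFDerivAt (fun y => c * ∑ i, f i y) (c • ∑ i, fderiv ℝ (f i) z) z :=
    (HasFDerivAt.fun_sum fun i _ => (hf i).hasFDerivAt).const_mul c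
  simp only [gradient_eq_rieszInv_comp, Function.comp_apply, h.fderiv, map_smul, map_sum]

/-- The mini-batch gradient is an unbiased estimator: its average over all `n ^ b` tuples of
indices is the full-batch gradient. -/
lemma average_gradient_minibatch {n b : ℕ} (hn : 0 < n) (hb : 0 < b) {f : Fin n → E → ℝ} {z : E}
    (hf : ∀ i, DifferentiableAt ℝ (f i) z) :
    ((n : ℝ) ^ b)⁻¹ • ∑ γ : Fin b → Fin n, gradient (fun y => (b : ℝ)⁻¹ * ∑ j, f (γ j) y) z =
      gradient (fun y => (n : ℝ)⁻¹ * ∑ i, f i y) z := by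
  -- A fixed coordinate `γ j` takes each value for exactly `n ^ (b - 1)` tuples.
  have hcount (j : Fin b) : ∑ γ : Fin b → Fin n, gradient (f (γ j)) z =
      (n : ℝ) ^ (b - 1) • ∑ i, gradient (f i) z := by
    have h := Fintype.sum_piFinset_apply (fun i => gradient (f i) z) Finset.univ j
    rw [Fintype.piFinset_univ] at h
    simpa [← Nat.cast_smul_eq_nsmul ℝ] using h
  have hn' : (n : ℝ) ≠ 0 := by positivity
  have hb' : (b : ℝ) ≠ 0 := by positivity
  rw [gradient_const_mul_sum _ hf,
    Finset.sum_congr rfl fun γ _ => gradient_const_mul_sum (b : ℝ)⁻¹ fun j => hf (γ j),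
    ← Finset.smul_sum, Finset.sum_comm, Finset.sum_congr rfl fun j _ => hcount j,
    Finset.sum_const, Finset.card_univ, Fintype.card_fin, ← Nat.cast_smul_eq_nsmul ℝ]
  simp only [smul_smul]
  congr 1
  obtain ⟨m, rfl⟩ : ∃ m, b = m + 1 := ⟨b - 1, by omega⟩
  simp only [Nat.add_sub_cancel, pow_succ]
  field_simp

end Gradients

/-- **n-SAM drift expansion.**
Let `f₁, …, fₙ : ℝ^d → ℝ` be `C³` with full-batch loss `F = (1/n) ∑ᵢ fᵢ`, let `x` satisfy
`∇F(x) ≠ 0`, and suppose `‖D³fᵢ(y)‖ ≤ K` for every `i` and every `y` in the closed ball of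
radius `ρ` around `x`.  Let `γ` consist of `b` indices drawn independently and uniformly from
`{1, …, n}` (expectation = average over all `n^b` tuples `γ : Fin b → Fin n`), with mini-batch
loss `f_γ = (1/b) ∑ⱼ f_{γⱼ}`, and set `u = ∇F(x)/‖∇F(x)‖`.  Then
`‖E[∇f_γ(x + ρu)] − ∇F(x) − ρ∇²F(x)∇F(x)/‖∇F(x)‖‖ ≤ (K/2) ρ²`, and
`∇²F(x)∇F(x)/‖∇F(x)‖` is precisely the gradient of `y ↦ ‖∇F(y)‖` at `x`; so the leading
drift of n-SAM is `−∇(F + ρ‖∇F‖)`. -/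
theorem nSAM_expected_update_expansion
    {d n b : ℕ} (hn : 0 < n) (hb : 0 < b)
    (f : Fin n → EuclideanSpace ℝ (Fin d) → ℝ)
    (hf : ∀ i, ContDiff ℝ 3 (f i))
    (F : EuclideanSpace ℝ (Fin d) → ℝ)
    (hF : F = fun y => (n : ℝ)⁻¹ * ∑ i, f i y)
    (x : EuclideanSpace ℝ (Fin d)) (hx : gradient F x ≠ 0)
    (ρ K : ℝ) (hρ : 0 ≤ ρ) (hK : 0 ≤ K)
    (hD3 : ∀ i, ∀ y ∈ Metric.closedBall x ρ, ‖iteratedFDeriv ℝ 3 (f i) y‖ ≤ K)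
    (Fb : (Fin b → Fin n) → EuclideanSpace ℝ (Fin d) → ℝ)
    (hFb : ∀ γ, Fb γ = fun y => (b : ℝ)⁻¹ * ∑ j, f (γ j) y)
    (u : EuclideanSpace ℝ (Fin d)) (hu : u = ‖gradient F x‖⁻¹ • gradient F x) :
    ‖(((n : ℝ) ^ b)⁻¹ • ∑ γ : Fin b → Fin n,
          gradient (Fb γ) (x + ρ • u))
        - gradient F x
        - ρ • (‖gradient F x‖⁻¹ • fderiv ℝ (gradient F) x (gradient F x))‖
      ≤ K / 2 * ρ ^ 2 ∧
    ‖gradient F x‖⁻¹ • fderiv ℝ (gradient F) x (gradient F x)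
      = gradient (fun y => ‖gradient F y‖) x := by
  obtain rfl : Fb = fun γ y => (b : ℝ)⁻¹ * ∑ j, f (γ j) y := funext hFb
  have hF3 : ContDiff ℝ 3 F := by
    rw [hF]
    exact contDiff_const.mul (ContDiff.sum fun i _ => hf i)
  refine ⟨?_, (gradient_norm_gradient hF3 hx).symm⟩
  have hu1 : ‖u‖ = 1 := by
    rw [hu, norm_smul, norm_inv, norm_norm, inv_mul_cancel₀ (norm_ne_zero_iff.2 hx)]
  rw [average_gradient_minibatch hn hb fun i => (hf i).differentiable (by norm_num) _, ← hF,
    ← map_smul, ← hu]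
  refine norm_taylor_remainder_le (contDiff_gradient hF3) hu1 hρ fun y hy => ?_
  rw [norm_fderiv_fderiv_eq, norm_iteratedFDeriv_gradient, hF]
  exact norm_iteratedFDeriv_average_le hn hf fun i => hD3 i y hy
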